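/- Let A, A' be objects of A and let f₁, f₂ : A → A' be morphisms in K^b(A)/𝔻 presented as f_j = g_j ∘ s_j⁻¹ ∘ i_j, where C_j, C'_j are objects of A, g_j ∈ A(C'_j, A'), s_j ∈ A(C'_j, C_j) with Cone(s_j) ∈ D, and i_j ∈ A(A, C_j). Let T be the two-term complex (A ⊕ C'₁ ⊕ C'₂ → C₁ ⊕ C₂, in degrees 0 and 1) with differential the matrix r with rows (i₁, s₁, 0) and (i₂, 0, s₂). Then f₁ = f₂ if and only if the chain map T → A' whose degree-0 component is (0, g₁, −g₂) admits a factorization, in the category C^b(A) of bounded complexes (not up to homotopy), through a complex that is an object of 𝔻. -/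

import Mathlib

open CategoryTheory Limits Pretriangulated ZeroObject

universe v u v' u'

section TriangulatedPrelude

variable {C : Type u} [Category.{v} C] [HasZeroObject C] [HasShift C ℤ] [Preadditive C]
  [∀ n : ℤ, (shiftFunctor C n).Additive] [Pretriangulated C]

/-- The objects of the smallest strict full triangulated subcategory of `C`
containing the set of objects `B`. -/
inductive genSub (B : Set C) : C → Prop
  | of (X : C) (hX : X ∈ B) : genSub B X
  | zero (X : C) (hX : IsZero X) : genSub B X
  | shift (X : C) (n : ℤ) (hX : genSub B X) : genSub B (X⟦n⟧)
  | ext₂ (T : Triangle C) (hT : T ∈ distTriang C) (h₁ : genSub B T.obj₁)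
      (h₃ : genSub B T.obj₃) : genSub B T.obj₂

/-- The triangulated subcategory of `C` generated by `B`. -/
def genSubcat (B : Set C) : ObjectProperty C :=
  genSub B

instance (B : Set C) : (genSubcat B).IsTriangulated where
  exists_zero := ⟨0, isZero_zero _, genSub.zero _ (isZero_zero _)⟩
  isStableUnderShiftBy n := ⟨fun X h => genSub.shift X n h⟩
  ext₂' T hT h₁ h₃ := ObjectProperty.le_isoClosure _ _ (genSub.ext₂ T hT h₁ h₃)

/-- The extension-closure of a class of objects `E`: the smallest class containing `E`
and `0` and such that for any distinguished triangle `X ⟶ Y ⟶ Z` with `X, Z` in the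
class, `Y` is also in the class. -/
inductive extClosure (E : Set C) : C → Prop
  | of (X : C) (hX : X ∈ E) : extClosure E X
  | zero (X : C) (hX : IsZero X) : extClosure E X
  | ext₂ (T : Triangle C) (hT : T ∈ distTriang C) (h₁ : extClosure E T.obj₁)
      (h₃ : extClosure E T.obj₃) : extClosure E T.obj₂

/-- `D_{[i,j]}`: the extension-closure of `∪_{i ≤ l ≤ j} D[l]`. -/
def shiftClosure (D : Set C) (i j : ℤ) : Set C :=
  extClosure {X | ∃ (Y : C) (l : ℤ), i ≤ l ∧ l ≤ j ∧ Y ∈ D ∧ X = Y⟦l⟧}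

/-- `D_{≥ i} = ∪_{k ≥ i} D_{[i,k]}`. -/
def shiftClosureGE (D : Set C) (i : ℤ) : Set C := {X | ∃ k, i ≤ k ∧ X ∈ shiftClosure D i k}

/-- `D_{≤ j} = ∪_{k ≤ j} D_{[k,j]}`. -/
def shiftClosureLE (D : Set C) (j : ℤ) : Set C := {X | ∃ k, k ≤ j ∧ X ∈ shiftClosure D k j}

/-- A set of objects `D` is weakly negative if `0 ∈ D` and `Hom(X, Y[i]) = 0`
for all `X, Y ∈ D` and all `i ≥ 2`. -/
def WeaklyNegative (D : Set C) : Prop :=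
  (0 : C) ∈ D ∧ ∀ X ∈ D, ∀ Y ∈ D, ∀ i : ℤ, 2 ≤ i → ∀ f : X ⟶ (Y⟦i⟧), f = 0

end TriangulatedPrelude

attribute [local instance] Limits.hasBinaryBiproducts_of_finite_biproducts

section KPrelude

variable {A : Type u} [Category.{v} A] [Preadditive A] [HasZeroObject A] [HasFiniteBiproducts A]

/-- The two-term cochain complex with `P` in degree `n` and `Q` in degree `n + 1`,
with differential given by `f : P ⟶ Q` (and all other terms `0`).
In particular, `twoComplex (-1) f` is the cone of a morphism `f` of `A`. -/
noncomputable def twoComplex (n : ℤ) {P Q : A} (f : P ⟶ Q) : CochainComplex A ℤ where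
  X i := if i = n then P else if i = n + 1 then Q else 0
  d i j :=
    if hij : i = n ∧ j = n + 1 then
      eqToHom (by simp [hij.1]) ≫ f ≫
        eqToHom (by simp [hij.2, show ¬ ((n : ℤ) + 1 = n) by omega])
    else 0
  shape i j hij := by
    rw [dif_neg]
    rintro ⟨rfl, rfl⟩
    exact hij rfl
  d_comp_d' i j k _ _ := by
    by_cases h1 : i = n ∧ j = n + 1
    · by_cases h2 : j = n ∧ k = n + 1
      · obtain ⟨h1a, h1b⟩ := h1; obtain ⟨h2a, h2b⟩ := h2; omega
      · rw [dif_neg h2, comp_zero]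
    · rw [dif_neg h1, zero_comp]

/-- The chain map from the two-term complex (in degrees `n`, `n + 1`) determined by
`f : P ⟶ Q` to the complex concentrated in degree `n` with value `M`, whose degree `n`
component is `g : P ⟶ M`. -/
noncomputable def twoComplexToSingle (n : ℤ) {P Q M : A} (f : P ⟶ Q) (g : P ⟶ M) :
    twoComplex n f ⟶ (HomologicalComplex.single A (ComplexShape.up ℤ) n).obj M where
  f i :=
    if h : i = n then
      eqToHom (by simp [twoComplex, h]) ≫ g ≫
        (HomologicalComplex.singleObjXSelf (ComplexShape.up ℤ) n M).inv ≫ eqToHom (by rw [h])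
    else 0
  comm' i j hij := by
    simp only [ComplexShape.up_Rel] at hij
    by_cases hj : j = n
    · have hi : ¬ (i = n ∧ j = n + 1) := by rintro ⟨rfl, rfl⟩; omega
      have hd : (twoComplex n f).d i j = 0 := by
        dsimp [twoComplex]; rw [dif_neg hi]; rfl
      rw [hd, zero_comp]
      have : i ≠ n := by omega
      rw [dif_neg this, zero_comp]
    · rw [dif_neg hj]
      rw [comp_zero]
      have : ((HomologicalComplex.single A (ComplexShape.up ℤ) n).obj M).d i j = 0 := by simp
      rw [this, comp_zero]

/-- The quotient functor `C^b(A) ⥤ K(A)` (restricted from all complexes). -/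
noncomputable abbrev homotopyQ : CochainComplex A ℤ ⥤ HomotopyCategory A (ComplexShape.up ℤ) :=
  HomotopyCategory.quotient A (ComplexShape.up ℤ)

/-- The canonical embedding of `A` into the homotopy category, as complexes concentrated
in degree `0`. -/
noncomputable abbrev iotaA : A ⥤ HomotopyCategory A (ComplexShape.up ℤ) :=
  HomologicalComplex.single A (ComplexShape.up ℤ) 0 ⋙ homotopyQ

/-- `B`: the set of cones of elements of `S`, viewed in the homotopy category. -/
def coneSet (S : MorphismProperty A) : Set (HomotopyCategory A (ComplexShape.up ℤ)) :=
  {X | ∃ (P Q : A) (s : P ⟶ Q), S s ∧ X = homotopyQ.obj (twoComplex (-1) s)}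

/-- The Verdier localization functor of the homotopy category by the triangulated
subcategory `𝔻` generated by the cones of elements of `S`. -/
noncomputable abbrev locQ (S : MorphismProperty A) :
    HomotopyCategory A (ComplexShape.up ℤ) ⥤ (genSubcat (coneSet S)).trW.Localization :=
  (genSubcat (coneSet S)).trW.Q

/-- The composite functor `A ⥤ K(A) ⥤ K(A)/𝔻`. -/
noncomputable abbrev uBig (S : MorphismProperty A) :
    A ⥤ (genSubcat (coneSet S)).trW.Localization :=
  iotaA ⋙ locQ S

/-- `A[S⁻¹]_add`: the full subcategory of the Verdier quotient whose
objects are those of `A` (viewed as complexes concentrated in degree `0`). -/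
def AddLoc (S : MorphismProperty A) : Type u := A

noncomputable instance (S : MorphismProperty A) : Category (AddLoc S) where
  Hom X Y := (uBig S).obj X ⟶ (uBig S).obj Y
  id X := 𝟙 ((uBig S).obj X)
  comp {X Y Z} f g :=
    @CategoryStruct.comp _ _ ((uBig S).obj X) ((uBig S).obj Y) ((uBig S).obj Z) f g

/-- The canonical functor `u : A ⥤ A[S⁻¹]_add` induced by the localization functor. -/
noncomputable def uFun (S : MorphismProperty A) : A ⥤ AddLoc S where
  obj X := X
  map f := (uBig S).map f
  map_id X := (uBig S).map_id X
  map_comp f g := (uBig S).map_comp f g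

noncomputable instance (S : MorphismProperty A) : Preadditive (AddLoc S) where
  homGroup X Y := inferInstanceAs (AddCommGroup ((uBig S).obj X ⟶ (uBig S).obj Y))
  add_comp P Q R f f' g :=
    @Preadditive.add_comp _ _ _ ((uBig S).obj P) ((uBig S).obj Q) ((uBig S).obj R) f f' g
  comp_add P Q R f g g' :=
    @Preadditive.comp_add _ _ _ ((uBig S).obj P) ((uBig S).obj Q) ((uBig S).obj R) f g g'

end KPrelude

/-- The matrix morphism `r` with rows `(i₁, s₁, 0)` and `(i₂, 0, s₂)`. -/
noncomputable def matrixR {A : Type u} [Category.{v} A] [Preadditive A] [HasZeroObject A]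
    [HasFiniteBiproducts A]
    {A₀ C₁ C'₁ C₂ C'₂ : A}
    (s₁ : C'₁ ⟶ C₁) (i₁ : A₀ ⟶ C₁) (s₂ : C'₂ ⟶ C₂) (i₂ : A₀ ⟶ C₂) :
    (A₀ ⊞ (C'₁ ⊞ C'₂) : A) ⟶ (C₁ ⊞ C₂ : A) :=
  biprod.desc (biprod.lift i₁ i₂)
    (biprod.desc (biprod.lift s₁ 0) (biprod.lift 0 s₂))

/-! The complex `T` is the shifted cone of `r`, so it sits in a distinguished triangle
`T ⟶ A₀ ⊞ C'₁ ⊞ C'₂ ⟶ C₁ ⊞ C₂`. As `s₁` and `s₂` are invertible in the Verdier quotient, the two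
roofs agree there if and only if `(0, g₁, -g₂)` factors through `r`, the factorization being
`(g₁ s₁⁻¹, -g₂ s₂⁻¹)`; by exactness this says that `T ⟶ A'` dies in the quotient, i.e. that it
factors up to homotopy through an object of `𝔻`. Adding the contractible cone of `𝟙 T` to that
object absorbs the homotopy. -/

section Verdier

variable {C : Type u} [Category.{v} C] [HasZeroObject C] [HasShift C ℤ] [Preadditive C]
  [∀ n : ℤ, (shiftFunctor C n).Additive] [Pretriangulated C]

instance (B : Set C) : (genSubcat B).IsClosedUnderIsomorphisms where
  of_iso e hX := by
    obtain ⟨_, _, _, hT⟩ := distinguished_cocone_triangle e.hom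
    exact genSub.ext₂ _ hT hX (genSub.zero _ (Triangle.isZero₃_of_isIso₁ _ hT e.isIso_hom))

lemma map_eq_zero_iff_factors_of_isLocalization_trW [IsTriangulated C] (P : ObjectProperty C)
    [P.IsTriangulated] {D : Type u'} [Category.{v'} D] [HasZeroMorphisms D] (L : C ⥤ D)
    [L.PreservesZeroMorphisms] [L.IsLocalization P.trW] {X Y : C} (f : X ⟶ Y) :
    L.map f = 0 ↔ ∃ Z, P Z ∧ ∃ (a : X ⟶ Z) (b : Z ⟶ Y), a ≫ b = f := by
  rw [← L.map_zero, MorphismProperty.map_eq_iff_postcomp L P.trW]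
  constructor
  · rintro ⟨Y', s, hs, hfs⟩
    obtain ⟨Z, b, _, hT, hZ⟩ := (P.trW_iff' s).1 hs
    obtain ⟨a, ha⟩ := Triangle.coyoneda_exact₂ _ hT f (hfs.trans zero_comp)
    exact ⟨Z, hZ, a, b, ha.symm⟩
  · rintro ⟨Z, hZ, a, b, rfl⟩
    obtain ⟨Y', s, _, hT⟩ := distinguished_cocone_triangle b
    have hbs : b ≫ s = 0 := comp_distTriang_mor_zero₁₂ _ hT
    refine ⟨Y', s, ObjectProperty.trW.mk' P hT hZ, ?_⟩
    rw [Category.assoc, hbs, comp_zero, zero_comp]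

end Verdier

section Strictification

open CochainComplex HomComplex

variable {A : Type u} [Category.{v} A] [Preadditive A] [HasBinaryBiproducts A]

lemma factors_mappingCone_id_of_homotopyQ_map_eq_zero {K M : CochainComplex A ℤ} (φ : K ⟶ M)
    (hφ : homotopyQ.map φ = 0) :
    ∃ d : mappingCone (𝟙 K) ⟶ M, mappingCone.inr (𝟙 K) ≫ d = φ := by
  obtain ⟨h⟩ := (HomotopyCategory.quotient_map_eq_zero_iff φ).1 hφ
  obtain ⟨α, hα⟩ := Cochain.equivHomotopy φ 0 h
  exact ⟨mappingCone.desc (𝟙 K) α φ (by simp [hα]), by simp⟩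

variable [HasZeroObject A]

lemma isZero_homotopyQ_obj_mappingCone_id (K : CochainComplex A ℤ) :
    IsZero (homotopyQ.obj (mappingCone (𝟙 K))) :=
  Triangle.isZero₃_of_isIso₁ _ (HomotopyCategory.mappingCone_triangleh_distinguished (𝟙 K))
    (inferInstanceAs (IsIso (homotopyQ.map (𝟙 K))))

lemma homotopyQ_map_factors_iff_factors
    (P : ObjectProperty (HomotopyCategory A (ComplexShape.up ℤ)))
    [P.IsTriangulated] [P.IsClosedUnderIsomorphisms] {K M : CochainComplex A ℤ} (φ : K ⟶ M) :
    (∃ Z, P Z ∧ ∃ (a : homotopyQ.obj K ⟶ Z) (b : Z ⟶ homotopyQ.obj M),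
        a ≫ b = homotopyQ.map φ) ↔
      ∃ Z : CochainComplex A ℤ, P (homotopyQ.obj Z) ∧
        ∃ (a : K ⟶ Z) (b : Z ⟶ M), a ≫ b = φ := by
  constructor
  · rintro ⟨Z, hZ, a, b, hab⟩
    obtain ⟨Z, rfl⟩ := HomotopyCategory.quotient_obj_surjective Z
    obtain ⟨a, rfl⟩ := homotopyQ.map_surjective a
    obtain ⟨b, rfl⟩ := homotopyQ.map_surjective b
    obtain ⟨d, hd⟩ := factors_mappingCone_id_of_homotopyQ_map_eq_zero (φ - a ≫ b)
      (by rw [Functor.map_sub, Functor.map_comp, hab, sub_self])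
    have := preservesBinaryBiproducts_of_preservesBiproducts (homotopyQ (A := A))
    have hsum : P (homotopyQ.obj Z ⊞ homotopyQ.obj (mappingCone (𝟙 K))) :=
      P.ext_of_isTriangulatedClosed₂ _ (binaryBiproductTriangle_distinguished _ _) hZ
        (P.prop_of_isZero (isZero_homotopyQ_obj_mappingCone_id K))
    exact ⟨Z ⊞ mappingCone (𝟙 K), P.prop_of_iso (homotopyQ.mapBiprod _ _).symm hsum,
      biprod.lift a (mappingCone.inr (𝟙 K)), biprod.desc b d,
      by rw [biprod.lift_desc, hd, add_sub_cancel]⟩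
  · rintro ⟨Z, hZ, a, b, rfl⟩
    exact ⟨_, hZ, homotopyQ.map a, homotopyQ.map b, (homotopyQ.map_comp a b).symm⟩

end Strictification

section TwoComplex

variable {A : Type u} [Category.{v} A] [Preadditive A] [HasZeroObject A] (n : ℤ) {P Q : A}
  (r : P ⟶ Q)

/-- The degree `n` term of the two-term complex `r : P ⟶ Q` is `P`, an equality of objects that is
only used through this isomorphism. -/
noncomputable def twoComplexXSourceIso : (twoComplex n r).X n ≅ P := eqToIso (if_pos rfl)

/-- The degree `n + 1` term of the two-term complex `r : P ⟶ Q` is `Q`, an equality of objects that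
is only used through this isomorphism. -/
noncomputable def twoComplexXTargetIso : (twoComplex n r).X (n + 1) ≅ Q :=
  eqToIso (by simp [twoComplex])

lemma twoComplex_d : (twoComplex n r).d n (n + 1) =
    (twoComplexXSourceIso n r).hom ≫ r ≫ (twoComplexXTargetIso n r).inv :=
  dif_pos ⟨rfl, rfl⟩

lemma twoComplex_d_eq_zero (i j : ℤ) (hi : i ≠ n) : (twoComplex n r).d i j = 0 :=
  dif_neg fun h => hi h.1

open HomologicalComplex

lemma twoComplexToSingle_f {M : A} (g : P ⟶ M) : (twoComplexToSingle n r g).f n =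
    (twoComplexXSourceIso n r).hom ≫ g ≫ (singleObjXSelf (ComplexShape.up ℤ) n M).inv := by
  dsimp only [twoComplexToSingle]
  rw [dif_pos rfl, eqToHom_refl, Category.comp_id]
  rfl

lemma twoComplexToSingle_id_comp_single_map {M : A} (g : P ⟶ M) :
    twoComplexToSingle n r (𝟙 P) ≫ (single A (ComplexShape.up ℤ) n).map g =
      twoComplexToSingle n r g := by
  apply to_single_hom_ext
  simp [twoComplexToSingle_f, single_map_f_self]

end TwoComplex

section MappingCocone

open HomologicalComplex CochainComplex HomComplex

variable {A : Type u} [Category.{v} A] [Preadditive A] [HasZeroObject A]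

lemma cochain_ofHom_eq_single {K : CochainComplex A ℤ} {n : ℤ} {X : A}
    (f : K ⟶ (single A (ComplexShape.up ℤ) n).obj X) :
    Cochain.ofHom f = Cochain.single (f.f n) 0 := by
  ext p
  obtain rfl | hp := eq_or_ne p n
  · simp
  · exact (isZero_single_obj_X _ _ _ _ hp).eq_of_tgt _ _

variable [HasBinaryBiproducts A]

lemma homotopyQ_mappingCocone_triangle_distinguished {K M : CochainComplex A ℤ} (φ : K ⟶ M) :
    homotopyQ.mapTriangle.obj (mappingCocone.triangle φ) ∈
      distTriang (HomotopyCategory A (ComplexShape.up ℤ)) := by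
  rw [rotate_distinguished_triangle]
  exact isomorphic_distinguished _ (HomotopyCategory.mappingCone_triangleh_distinguished φ) _
    (homotopyQ.mapTriangleRotateIso.app _ ≪≫
      homotopyQ.mapTriangle.mapIso (mappingCocone.rotateTriangleIso φ))

variable (n : ℤ) {P Q : A} (r : P ⟶ Q)

/-- The comparison map from the two-term complex `r : P ⟶ Q` to the mapping cocone of `r`, viewed
as a morphism of complexes concentrated in degree `n`. The sign is forced by the differential of
the cocone. -/
noncomputable def twoComplexToMappingCocone :
    twoComplex n r ⟶ mappingCocone ((single A (ComplexShape.up ℤ) n).map r) :=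
  mappingCocone.lift _ (twoComplexToSingle n r (𝟙 P))
    (-Cochain.single ((twoComplexXTargetIso n r).hom ≫
      (singleObjXSelf (ComplexShape.up ℤ) n Q).inv) (-1)) (by
      rw [δ_neg, Cochain.δ_single _ (-1) 0 (by lia) n (n + 1) rfl rfl, cochain_ofHom_eq_single]
      simp [twoComplex_d, twoComplexToSingle_f, single_map_f_self])

lemma twoComplexToMappingCocone_fst :
    twoComplexToMappingCocone n r ≫ mappingCocone.fst _ = twoComplexToSingle n r (𝟙 P) :=
  mappingCocone.lift_fst _ _ _ _

/-- The comparison map in the opposite direction to `twoComplexToMappingCocone`. Both maps are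
compatible with the projections to the degree `n` term, which is all that is needed of them. -/
noncomputable def mappingCoconeToTwoComplex :
    mappingCocone ((single A (ComplexShape.up ℤ) n).map r) ⟶ twoComplex n r :=
  mappingCocone.desc _
    (Cochain.single ((singleObjXSelf (ComplexShape.up ℤ) n P).hom ≫
      (twoComplexXSourceIso n r).inv) 0)
    (Cocycle.mk (-Cochain.single ((singleObjXSelf (ComplexShape.up ℤ) n Q).hom ≫
      (twoComplexXTargetIso n r).inv) 1) 2 (by lia) (by
        rw [δ_neg, Cochain.δ_single _ 1 2 (by lia) (n - 1) (n + 2) (by lia) (by lia)]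
        simp [twoComplex_d_eq_zero]))
    (by
      rw [Cochain.δ_single _ 0 1 (by lia) (n - 1) (n + 1) (by lia) (by lia)]
      ext p q hpq
      obtain rfl | hp := eq_or_ne p n
      · subst hpq
        simp [twoComplex_d, single_map_f_self]
      · exact (isZero_single_obj_X _ _ _ _ hp).eq_of_src _ _)

lemma mappingCoconeToTwoComplex_comp_twoComplexToSingle :
    mappingCoconeToTwoComplex n r ≫ twoComplexToSingle n r (𝟙 P) = mappingCocone.fst _ := by
  apply to_single_hom_ext
  have hid := mappingCocone.id_X ((single A (ComplexShape.up ℤ) n).map r) n (n + -1) rfl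
  have hsnd : (mappingCocone.snd ((single A (ComplexShape.up ℤ) n).map r)).v n (n + -1) rfl = 0 :=
    (isZero_single_obj_X _ _ _ _ (by lia)).eq_of_tgt _ _
  rw [hsnd, zero_comp, add_zero] at hid
  rw [← Category.id_comp ((mappingCoconeToTwoComplex n r ≫ twoComplexToSingle n r (𝟙 P)).f n),
    ← hid]
  simp [mappingCoconeToTwoComplex, twoComplexToSingle_f]

end MappingCocone

section SingleComp

open CochainComplex

variable {A : Type u} [Category.{v} A] [Preadditive A] [HasZeroObject A] [HasBinaryBiproducts A]
  {D : Type u'} [Category.{v'} D]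

/-- The functor `A ⥤ K(A) ⥤ D` that places an object of `A` in degree `n` and then applies `L`.
For `n = 0` and `L` the Verdier quotient functor, this is `uBig`. -/
noncomputable abbrev singleComp (L : HomotopyCategory A (ComplexShape.up ℤ) ⥤ D) (n : ℤ) : A ⥤ D :=
  (HomologicalComplex.single A (ComplexShape.up ℤ) n ⋙ homotopyQ) ⋙ L

variable [Preadditive D] [HasZeroObject D] [HasShift D ℤ]
  [∀ k : ℤ, (CategoryTheory.shiftFunctor D k).Additive] [Pretriangulated D]
  (L : HomotopyCategory A (ComplexShape.up ℤ) ⥤ D) [L.CommShift ℤ] [L.IsTriangulated] (n : ℤ)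
  {P Q : A} (r : P ⟶ Q)

lemma map_twoComplexToSingle_id_comp_eq_zero_iff {Z : D} (g : (singleComp L n).obj P ⟶ Z) :
    L.map (homotopyQ.map (twoComplexToSingle n r (𝟙 P))) ≫ g = 0 ↔
      ∃ h, g = (singleComp L n).map r ≫ h := by
  let φ := (HomologicalComplex.single A (ComplexShape.up ℤ) n).map r
  obtain ⟨δ, hT⟩ : ∃ δ, Triangle.mk (L.map (homotopyQ.map (mappingCocone.fst φ)))
      ((singleComp L n).map r) δ ∈ distTriang D :=
    ⟨_, L.map_distinguished _ (homotopyQ_mappingCocone_triangle_distinguished φ)⟩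
  constructor
  · intro hg
    refine Triangle.yoneda_exact₂ _ hT g ?_
    change L.map (homotopyQ.map (mappingCocone.fst φ)) ≫ g = 0
    rw [← mappingCoconeToTwoComplex_comp_twoComplexToSingle, homotopyQ.map_comp, L.map_comp,
      Category.assoc, hg, comp_zero]
  · rintro ⟨h, rfl⟩
    have hzero : L.map (homotopyQ.map (mappingCocone.fst φ)) ≫ (singleComp L n).map r = 0 :=
      comp_distTriang_mor_zero₁₂ _ hT
    have hcomp : L.map (homotopyQ.map (twoComplexToSingle n r (𝟙 P))) ≫
        (singleComp L n).map r = 0 := by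
      rw [← twoComplexToMappingCocone_fst, homotopyQ.map_comp, L.map_comp, Category.assoc, hzero,
        comp_zero]
    exact (Category.assoc _ _ _).symm.trans (by rw [hcomp, zero_comp])

lemma map_twoComplexToSingle_eq_zero_iff {M : A} (g : P ⟶ M) :
    L.map (homotopyQ.map (twoComplexToSingle n r g)) = 0 ↔
      ∃ h, (singleComp L n).map g = (singleComp L n).map r ≫ h := by
  rw [← map_twoComplexToSingle_id_comp_eq_zero_iff, ← twoComplexToSingle_id_comp_single_map,
    homotopyQ.map_comp, L.map_comp]
  rfl

end SingleComp

section Roofs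

variable {A : Type u} [Category.{v} A] [Preadditive A] {D : Type u'} [Category.{v'} D]
  [Preadditive D] (F : A ⥤ D) [F.Additive]

lemma map_biprod_hom_ext_iff {X Y : A} [HasBinaryBiproduct X Y] {Z : D} {f g : F.obj (X ⊞ Y) ⟶ Z} :
    f = g ↔ F.map biprod.inl ≫ f = F.map biprod.inl ≫ g ∧
      F.map biprod.inr ≫ f = F.map biprod.inr ≫ g := by
  refine ⟨by rintro rfl; exact ⟨rfl, rfl⟩, fun ⟨hinl, hinr⟩ => ?_⟩
  have hid : 𝟙 (F.obj (X ⊞ Y)) =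
      F.map biprod.fst ≫ F.map biprod.inl + F.map biprod.snd ≫ F.map biprod.inr := by
    rw [← F.map_comp, ← F.map_comp, ← F.map_add, biprod.total, F.map_id]
  rw [← Category.id_comp f, ← Category.id_comp g, hid]
  simp only [Preadditive.add_comp, Category.assoc, hinl, hinr]

variable [HasZeroObject A] [HasFiniteBiproducts A] {A₀ A' C₁ C'₁ C₂ C'₂ : A}
  (s₁ : C'₁ ⟶ C₁) (i₁ : A₀ ⟶ C₁) (s₂ : C'₂ ⟶ C₂) (i₂ : A₀ ⟶ C₂)

lemma inl_matrixR :
    biprod.inl ≫ matrixR s₁ i₁ s₂ i₂ = i₁ ≫ biprod.inl + i₂ ≫ biprod.inr := by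
  apply biprod.hom_ext <;> simp [matrixR]

lemma inl_inr_matrixR :
    biprod.inl ≫ biprod.inr ≫ matrixR s₁ i₁ s₂ i₂ = s₁ ≫ biprod.inl := by
  apply biprod.hom_ext <;> simp [matrixR]

lemma inr_inr_matrixR :
    biprod.inr ≫ biprod.inr ≫ matrixR s₁ i₁ s₂ i₂ = s₂ ≫ biprod.inr := by
  apply biprod.hom_ext <;> simp [matrixR]

lemma map_desc_eq_map_matrixR_comp_iff (g₀ : A₀ ⟶ A') (g₁ : C'₁ ⟶ A') (g₂ : C'₂ ⟶ A')
    (h : F.obj (C₁ ⊞ C₂) ⟶ F.obj A') :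
    F.map (biprod.desc g₀ (biprod.desc g₁ g₂)) = F.map (matrixR s₁ i₁ s₂ i₂) ≫ h ↔
      F.map g₀ = F.map i₁ ≫ F.map biprod.inl ≫ h + F.map i₂ ≫ F.map biprod.inr ≫ h ∧
      F.map g₁ = F.map s₁ ≫ F.map biprod.inl ≫ h ∧
      F.map g₂ = F.map s₂ ≫ F.map biprod.inr ≫ h := by
  simp only [map_biprod_hom_ext_iff F, ← F.map_comp, ← F.map_comp_assoc, biprod.inl_desc,
    biprod.inr_desc, inl_matrixR, inl_inr_matrixR, inr_inr_matrixR, F.map_add,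
    Preadditive.add_comp]

lemma roof_eq_roof_iff_factors_matrixR [IsIso (F.map s₁)] [IsIso (F.map s₂)]
    (g₁ : C'₁ ⟶ A') (g₂ : C'₂ ⟶ A') :
    F.map i₁ ≫ inv (F.map s₁) ≫ F.map g₁ = F.map i₂ ≫ inv (F.map s₂) ≫ F.map g₂ ↔
      ∃ h : F.obj (C₁ ⊞ C₂) ⟶ F.obj A',
        F.map (biprod.desc 0 (biprod.desc g₁ (-g₂))) = F.map (matrixR s₁ i₁ s₂ i₂) ≫ h := by
  simp only [map_desc_eq_map_matrixR_comp_iff, F.map_zero, F.map_neg]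
  constructor
  · intro hroof
    refine ⟨F.map biprod.fst ≫ inv (F.map s₁) ≫ F.map g₁ -
      F.map biprod.snd ≫ inv (F.map s₂) ≫ F.map g₂, ?_⟩
    simp [← F.map_comp_assoc, hroof]
  · rintro ⟨h, h₀, h₁, h₂⟩
    rw [h₁, neg_eq_iff_eq_neg.1 h₂, IsIso.inv_hom_id_assoc, Preadditive.comp_neg,
      IsIso.inv_hom_id_assoc, Preadditive.comp_neg]
    exact eq_neg_of_add_eq_zero_left h₀.symm

end Roofs

theorem statement15_general {A : Type u} [Category.{v} A] [Preadditive A] [HasZeroObject A]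
    [HasFiniteBiproducts A] {D : Type u'} [Category.{v'} D] [Preadditive D] [HasZeroObject D]
    [HasShift D ℤ] [∀ k : ℤ, (shiftFunctor D k).Additive] [Pretriangulated D]
    (P : ObjectProperty (HomotopyCategory A (ComplexShape.up ℤ)))
    [P.IsTriangulated] [P.IsClosedUnderIsomorphisms]
    (L : HomotopyCategory A (ComplexShape.up ℤ) ⥤ D) [L.CommShift ℤ] [L.IsTriangulated]
    [L.IsLocalization P.trW] (n : ℤ) {A₀ A' C₁ C'₁ C₂ C'₂ : A}
    (g₁ : C'₁ ⟶ A') (s₁ : C'₁ ⟶ C₁) (i₁ : A₀ ⟶ C₁)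
    (g₂ : C'₂ ⟶ A') (s₂ : C'₂ ⟶ C₂) (i₂ : A₀ ⟶ C₂)
    [IsIso ((singleComp L n).map s₁)] [IsIso ((singleComp L n).map s₂)] :
    (singleComp L n).map i₁ ≫ inv ((singleComp L n).map s₁) ≫ (singleComp L n).map g₁ =
        (singleComp L n).map i₂ ≫ inv ((singleComp L n).map s₂) ≫ (singleComp L n).map g₂ ↔
      ∃ T' : CochainComplex A ℤ, P (homotopyQ.obj T') ∧
        ∃ (a : twoComplex n (matrixR s₁ i₁ s₂ i₂) ⟶ T')
          (b : T' ⟶ (HomologicalComplex.single A (ComplexShape.up ℤ) n).obj A'),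
          a ≫ b = twoComplexToSingle n (matrixR s₁ i₁ s₂ i₂)
            (biprod.desc 0 (biprod.desc g₁ (-g₂))) := by
  rw [roof_eq_roof_iff_factors_matrixR, ← map_twoComplexToSingle_eq_zero_iff,
    map_eq_zero_iff_factors_of_isLocalization_trW P L, homotopyQ_map_factors_iff_factors]

/-- Proposition: equality criterion for two morphisms of `K^b(A)/𝔻` presented in the
form `g_j ∘ s_j⁻¹ ∘ i_j`: they are equal if and only if the chain map with degree zero
component `(0, g₁, −g₂)` out of the two-term complex `T` with differential `r` factors,
in the category of bounded complexes (with actual chain maps), through a complex that is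
an object of `𝔻`. -/
theorem statement15 {A : Type u} [Category.{v} A] [Preadditive A] [HasZeroObject A]
    [HasFiniteBiproducts A] (S : MorphismProperty A)
    (A₀ A' C₁ C'₁ C₂ C'₂ : A)
    (g₁ : C'₁ ⟶ A') (s₁ : C'₁ ⟶ C₁) (i₁ : A₀ ⟶ C₁)
    (g₂ : C'₂ ⟶ A') (s₂ : C'₂ ⟶ C₂) (i₂ : A₀ ⟶ C₂)
    (hD₁ : extClosure (coneSet S) (homotopyQ.obj (twoComplex (-1) s₁)))
    (hD₂ : extClosure (coneSet S) (homotopyQ.obj (twoComplex (-1) s₂)))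
    [IsIso ((uBig S).map s₁)] [IsIso ((uBig S).map s₂)]
    (f₁ f₂ : (uBig S).obj A₀ ⟶ (uBig S).obj A')
    (hf₁ : f₁ = (uBig S).map i₁ ≫ inv ((uBig S).map s₁) ≫ (uBig S).map g₁)
    (hf₂ : f₂ = (uBig S).map i₂ ≫ inv ((uBig S).map s₂) ≫ (uBig S).map g₂) :
    f₁ = f₂ ↔
      ∃ T' : CochainComplex A ℤ,
        genSub (coneSet S) (homotopyQ.obj T') ∧
        ∃ (a : twoComplex 0 (matrixR s₁ i₁ s₂ i₂) ⟶ T')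
          (b : T' ⟶ (HomologicalComplex.single A (ComplexShape.up ℤ) 0).obj A'),
          a ≫ b = twoComplexToSingle 0 (matrixR s₁ i₁ s₂ i₂)
            (biprod.desc 0 (biprod.desc g₁ (-g₂))) := by
  subst hf₁ hf₂
  exact statement15_general (genSubcat (coneSet S)) (locQ S) 0 g₁ s₁ i₁ g₂ s₂ i₂
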